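/- Suppose X^n ⊂ ℝ^d (d ≥ 2) is in general position, let λ_0 = inf over u ∈ S^{d−1} of λ*(X_u^n), and let m be an integer with 1 ≤ m ≤ n·λ_0 − 1. Then for every y ∈ ℝ^d, if Y^m consists of m repetitions of y, the Tukey halfspace median of the contaminated sample satisfies T*(X^n ∪ Y^m) ∈ cov(X^n); that is, fewer than n·λ_0 repetitions of an arbitrary point cannot move the halfspace median outside the convex hull of the original sample. -/

import Mathlib

open scoped RealInnerProductSpace
open MeasureTheory

noncomputable section

/-- `E d` is the Euclidean space `ℝ^d`. -/
abbrev E (d : ℕ) : Type := EuclideanSpace ℝ (Fin d)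

/-- A sample `X` of `n` points in `ℝ^d` is in general position if no affine hyperplane
(encoded as `{x | ⟪v, x⟫ = c}` for some `v ≠ 0`) contains more than `d` of the points. -/
def inGeneralPosition {d n : ℕ} (X : Fin n → E d) : Prop :=
  ∀ v : E d, v ≠ 0 → ∀ c : ℝ, ({i : Fin n | ⟪v, X i⟫ = c} : Set (Fin n)).ncard ≤ d

/-- Number of sample points in the closed halfspace `{z | ⟪u, z⟫ ≤ ⟪u, x⟫}`. -/
def sideCount {d n : ℕ} (X : Fin n → E d) (u x : E d) : ℕ :=
  ({i : Fin n | ⟪u, X i⟫ ≤ ⟪u, x⟫} : Set (Fin n)).ncard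

/-- Tukey's halfspace depth of `x` with respect to the sample `X`. -/
def depth {d n : ℕ} (X : Fin n → E d) (x : E d) : ℝ :=
  sInf {r : ℝ | ∃ u : E d, ‖u‖ = 1 ∧ r = (sideCount X u x : ℝ) / (n : ℝ)}

/-- The maximum Tukey depth `λ*` of the sample `X`. -/
def maxDepth {d n : ℕ} (X : Fin n → E d) : ℝ :=
  sSup (Set.range (depth X))

/-- The set `M(X)` of deepest points. -/
def MSet {d n : ℕ} (X : Fin n → E d) : Set (E d) :=
  {x | depth X x = maxDepth X}

/-- `U_x`: the set of optimal (unit) directions realizing the depth at `x`. -/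
def USet {d n : ℕ} (X : Fin n → E d) (x : E d) : Set (E d) :=
  {u | ‖u‖ = 1 ∧ (sideCount X u x : ℝ) / (n : ℝ) = depth X x}

/-- `H_{x,y}`: the open hemisphere of unit directions `u` with `⟪u, x⟫ < ⟪u, y⟫`. -/
def HSet {d : ℕ} (x y : E d) : Set (E d) :=
  {u | ‖u‖ = 1 ∧ ⟪u, x⟫ < ⟪u, y⟫}

/-- `B_z`. -/
def BSet {d n : ℕ} (X : Fin n → E d) (z : E d) : Set (E d) :=
  {x | x ∈ MSet X ∧ USet X x ∩ HSet x z = ∅}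

/-- `B̃_z = B_z \ {z}`. -/
def BTilde {d n : ℕ} (X : Fin n → E d) (z : E d) : Set (E d) :=
  BSet X z \ {z}

/-- `v` is a unit vector normal to an affine hyperplane spanned by `d` of the sample points. -/
def normalToSampleHyperplane {d n : ℕ} (X : Fin n → E d) (v : E d) : Prop :=
  ‖v‖ = 1 ∧ ∃ (s : Finset (Fin n)) (c : ℝ), s.card = d ∧
    (affineSpan ℝ (X '' (s : Set (Fin n))) : Set (E d)) = {x : E d | ⟪v, x⟫ = c}

/-- Condition (2.1) on a unit direction `u`. -/
def cond21 {d n : ℕ} (X : Fin n → E d) (u : E d) : Prop :=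
  ∀ v : E d, normalToSampleHyperplane X v → ⟪u, v⟫ ≠ 0

/-- `A` represents the columns of a `d × (d-1)` matrix which together with the unit
vector `u` form an orthonormal basis of `ℝ^d`. -/
def IsAu {d : ℕ} (u : E d) (A : Fin (d - 1) → E d) : Prop :=
  ‖u‖ = 1 ∧ Orthonormal ℝ A ∧ ∀ j, ⟪A j, u⟫ = 0

/-- The `A_u`-projection `A_u^T x ∈ ℝ^{d-1}` of a point `x ∈ ℝ^d`. -/
def proj {d : ℕ} (A : Fin (d - 1) → E d) (x : E d) : E (d - 1) :=
  (WithLp.equiv 2 (Fin (d - 1) → ℝ)).symm (fun j => ⟪A j, x⟫)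

/-- The embedding `A_u x = ∑ j x_j A_j ∈ ℝ^d` of a point `x ∈ ℝ^{d-1}`. -/
def embed {d : ℕ} (A : Fin (d - 1) → E d) (x : E (d - 1)) : E d :=
  ∑ j, x j • A j

/-- `λ₀ = inf_{u ∈ S^{d-1}} λ*(X_u^n)`, the infimum over all directions of the maximum
Tukey depth of the projected sample. -/
def lambda0 {d n : ℕ} (X : Fin n → E d) : ℝ :=
  sInf {r : ℝ | ∃ (u : E d) (A : Fin (d - 1) → E d),
    IsAu u A ∧ r = maxDepth (fun i => proj A (X i))}

/-- The average (barycenter) of a set `K ⊆ ℝ^d`, taken with respect to the Hausdorff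
measure of dimension equal to the affine dimension of `K`. -/
def setAverage {d : ℕ} (K : Set (E d)) : E d :=
  (μH[(Module.finrank ℝ (affineSpan ℝ K).direction : ℝ)] K).toReal⁻¹ •
    ∫ x in K, x ∂(μH[(Module.finrank ℝ (affineSpan ℝ K).direction : ℝ)])

/-- Tukey's halfspace median: the average of all deepest points. -/
def TukeyMedian {d n : ℕ} (X : Fin n → E d) : E d :=
  setAverage (MSet X)

/-- `m` contaminating points suffice to break down the Tukey median at `X`. -/
def breaksDown {d n : ℕ} (X : Fin n → E d) (m : ℕ) : Prop :=
  ∀ C : ℝ, ∃ Y : Fin m → E d, C < ‖TukeyMedian (Fin.append X Y) - TukeyMedian X‖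

/-- The finite sample (additional) breakdown point of the Tukey median at `X`. -/
def FSBP {d n : ℕ} (X : Fin n → E d) : ℝ :=
  sInf {r : ℝ | ∃ m : ℕ, 1 ≤ m ∧ breaksDown X m ∧ r = (m : ℝ) / ((n : ℝ) + (m : ℝ))}

/-- Conical Carathéodory theorem. -/
lemma conical_caratheodory {d : ℕ} : ∀ (k : ℕ) (s : Finset (E d)) (c : E d → ℝ), s.card ≤ k →
    (∀ v ∈ s, 0 < c v) → ∃ (t : Finset (E d)) (c' : E d → ℝ), t ⊆ s ∧ (∀ v ∈ t, 0 < c' v) ∧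
      ∑ v ∈ t, c' v • v = ∑ v ∈ s, c v • v ∧ LinearIndepOn ℝ id (t : Set (E d)) := by
  intro k
  induction k with
  | zero =>
    intro s c hs hc
    have : s = ∅ := by simpa using hs
    subst this
    exact ⟨∅, c, by simp, by simp, rfl, by simp⟩
  | succ k ih =>
    intro s c hs hc
    by_cases hli : LinearIndepOn ℝ id (s : Set (E d))
    · exact ⟨s, c, Finset.Subset.refl _, hc, rfl, hli⟩
    · have hg : ∃ g : E d → ℝ, ∑ v ∈ s, g v • v = 0 ∧ ∃ v ∈ s, 0 < g v := by
        rw [linearIndepOn_finset_iff] at hli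
        push Not at hli
        obtain ⟨g, hg0, v, hv, hgv⟩ := hli
        rcases lt_or_gt_of_ne hgv with h | h
        · refine ⟨fun v => - g v, ?_, v, hv, by simpa using h⟩
          simp only [neg_smul, Finset.sum_neg_distrib]
          simpa using hg0
        · exact ⟨g, by simpa using hg0, v, hv, h⟩
      obtain ⟨g, hg0, v1, hv1, hgv1⟩ := hg
      obtain ⟨v0, hv0, hmin⟩ := Finset.exists_min_image (s.filter (fun v => 0 < g v))
        (fun v => c v / g v) ⟨v1, by simp [hv1, hgv1]⟩
      simp only [Finset.mem_filter] at hv0 hmin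
      set a := c v0 / g v0 with ha
      have ha0 : 0 < a := div_pos (hc _ hv0.1) hv0.2
      set c1 : E d → ℝ := fun v => c v - a * g v with hc1
      have hc1n : ∀ v ∈ s, 0 ≤ c1 v := by
        intro v hv
        simp only [hc1, sub_nonneg]
        rcases lt_or_ge 0 (g v) with h | h
        · have := hmin v ⟨hv, h⟩
          rwa [le_div_iff₀ h] at this
        · have := hc v hv
          nlinarith
      have hz : c1 v0 = 0 := by
        simp only [hc1, ha]
        field_simp [hv0.2.ne']
        simp
      have hcard : (s.filter (fun v => c1 v ≠ 0)).card < s.card := by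
        apply Finset.card_lt_card
        rw [Finset.ssubset_iff_subset_ne]
        refine ⟨Finset.filter_subset _ _, fun h => ?_⟩
        have := h ▸ hv0.1
        simp [hz] at this
      obtain ⟨t, c', ht, hc', hsum, hl⟩ := ih (s.filter (fun v => c1 v ≠ 0)) c1 (by omega)
        (fun v hv => by
          simp only [Finset.mem_filter] at hv
          exact lt_of_le_of_ne (hc1n v hv.1) (Ne.symm hv.2))
      refine ⟨t, c', ht.trans (Finset.filter_subset _ _), hc', ?_, hl⟩
      rw [hsum, Finset.sum_filter_of_ne (by
        intro v _ h h'
        simp [h'] at h)]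
      simp only [hc1, sub_smul, Finset.sum_sub_distrib, mul_smul, ← Finset.smul_sum, hg0]
      simp

/-- A direction on which a linearly independent family takes the value `1`. -/
lemma exists_inner_eq_one {d : ℕ} (t : Set (E d)) (h : LinearIndepOn ℝ id t) :
    ∃ u : E d, ∀ v ∈ t, ⟪u, v⟫ = 1 := by
  let b := Module.Basis.extend h
  let f : E d →ₗ[ℝ] ℝ := b.constr ℝ (fun _ => (1 : ℝ))
  refine ⟨(InnerProductSpace.toDual ℝ (E d)).symm (LinearMap.toContinuousLinearMap f), ?_⟩
  intro v hv
  rw [InnerProductSpace.toDual_symm_apply]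
  have hv' : v ∈ h.extend (Set.subset_univ t) := h.subset_extend _ hv
  have := b.constr_basis ℝ (fun _ => (1 : ℝ)) ⟨v, hv'⟩
  simpa [b, f] using this

/-- hypothesis extracted from `lambda0`. -/
def ProjDeep {d n : ℕ} (X : Fin n → E d) (m : ℕ) : Prop :=
  ∀ u : E d, u ≠ 0 → ∃ x0 : E d, ∀ w : E d, w ≠ 0 → ⟪w, u⟫ = 0 → m + 1 ≤ sideCount X w x0

lemma no_positive_combination {d n : ℕ} (X : Fin n → E d) (m : ℕ) (hmn : m < n)
    (hP : ProjDeep X m) (y : E d) (s : Finset (E d)) (c : E d → ℝ)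
    (hc : ∀ v ∈ s, 0 < c v)
    (hs : ∀ v ∈ s, ({i : Fin n | 0 < ⟪v, X i - y⟫} : Set (Fin n)).ncard ≤ m)
    (hp : ∀ i, 0 < ⟪∑ v ∈ s, c v • v, X i - y⟫) : False := by
  obtain ⟨t, c', hts, hc', hsum, hl⟩ := conical_caratheodory s.card s c le_rfl hc
  rw [← hsum] at hp
  set p := ∑ v ∈ t, c' v • v with hpdef
  obtain ⟨u, hu⟩ := exists_inner_eq_one _ hl
  have htne : t.Nonempty := by
    rw [Finset.nonempty_iff_ne_empty]
    rintro rfl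
    have := hp ⟨0, by omega⟩
    simp [hpdef] at this
  set S := ∑ v ∈ t, c' v with hS
  have hSpos : 0 < S := Finset.sum_pos hc' htne
  have hpu : ⟪p, u⟫ = S := by
    rw [hpdef, sum_inner, hS]
    apply Finset.sum_congr rfl
    intro v hv
    rw [real_inner_smul_left, real_inner_comm, hu v hv, mul_one]
  have hu0 : u ≠ 0 := by
    rintro rfl
    simp at hpu
    linarith
  obtain ⟨x0, hx0⟩ := hP u hu0
  have hlt : ∀ v ∈ t, ⟪v - S⁻¹ • p, x0 - y⟫ < 0 := by
    intro v hv
    have hneg : ∀ i, ⟪v, X i - y⟫ ≤ 0 → ⟪v - S⁻¹ • p, X i - y⟫ < 0 := by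
      intro i hi
      rw [inner_sub_left, real_inner_smul_left]
      have := mul_pos (inv_pos.2 hSpos) (hp i)
      linarith
    have hv1 := hs v (hts hv)
    have hw0 : v - S⁻¹ • p ≠ 0 := by
      intro h0
      have : ∃ i, ¬ (0 < ⟪v, X i - y⟫) := by
        by_contra hcon
        push Not at hcon
        have : ({i : Fin n | 0 < ⟪v, X i - y⟫} : Set (Fin n)) = Set.univ := by
          ext i; simp [hcon i]
        rw [this, Set.ncard_univ, Nat.card_eq_fintype_card, Fintype.card_fin] at hv1
        omega
      obtain ⟨i, hi⟩ := this
      have := hneg i (not_lt.1 hi)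
      rw [h0] at this
      simp at this
    have hperp : ⟪-(v - S⁻¹ • p), u⟫ = 0 := by
      rw [inner_neg_left, inner_sub_left, real_inner_smul_left, hpu, real_inner_comm, hu v hv]
      field_simp
      simp
    have h2 := hx0 _ (neg_ne_zero.2 hw0) hperp
    have : ∃ i, ⟪-(v - S⁻¹ • p), X i⟫ ≤ ⟪-(v - S⁻¹ • p), x0⟫ ∧ ¬ (0 < ⟪v, X i - y⟫) := by
      by_contra hcon
      push Not at hcon
      have := Set.ncard_le_ncard (s := {i : Fin n | ⟪-(v - S⁻¹ • p), X i⟫ ≤ ⟪-(v - S⁻¹ • p), x0⟫})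
        (t := {i : Fin n | 0 < ⟪v, X i - y⟫}) (fun i hi => hcon i hi) (Set.toFinite _)
      unfold sideCount at h2
      omega
    obtain ⟨i, hi1, hi2⟩ := this
    have h3 := hneg i (not_lt.1 hi2)
    rw [inner_neg_left, inner_neg_left] at hi1
    rw [inner_sub_right] at h3 ⊢
    linarith
  have hz : ∑ v ∈ t, c' v • (v - S⁻¹ • p) = 0 := by
    simp only [smul_sub, Finset.sum_sub_distrib, ← Finset.sum_smul]
    rw [← hpdef, ← hS, smul_smul, mul_inv_cancel₀ hSpos.ne', one_smul, sub_self]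
  have h0 : ∑ v ∈ t, c' v * ⟪v - S⁻¹ • p, x0 - y⟫ = 0 := by
    have := congrArg (fun z => ⟪z, x0 - y⟫) hz
    simpa [sum_inner, real_inner_smul_left] using this
  have : ∑ v ∈ t, c' v * ⟪v - S⁻¹ • p, x0 - y⟫ < 0 :=
    Finset.sum_neg (fun v hv => mul_neg_of_pos_of_neg (hc' v hv) (hlt v hv)) htne
  linarith

lemma exists_dir {d n : ℕ} (X : Fin n → E d) (m : ℕ) (hmn : m < n)
    (hP : ProjDeep X m) (y : E d) (hy : y ∉ convexHull ℝ (Set.range X)) :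
    ∃ u p : E d, (∀ i, 0 < ⟪p, X i - y⟫) ∧ 0 < ⟪u, p⟫ ∧
      ∀ v : E d, 0 < ⟪u, v⟫ → m + 1 ≤ ({i : Fin n | 0 < ⟪v, X i - y⟫} : Set (Fin n)).ncard := by
  have hK : IsClosed (convexHull ℝ (Set.range X)) :=
    ((Set.finite_range X).isCompact_convexHull ℝ).isClosed
  obtain ⟨f, c, hf1, hf2⟩ := geometric_hahn_banach_point_closed (convex_convexHull ℝ _) hK hy
  set p := (InnerProductSpace.toDual ℝ (E d)).symm f with hp
  have hpX : ∀ i, 0 < ⟪p, X i - y⟫ := by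
    intro i
    rw [hp, InnerProductSpace.toDual_symm_apply, map_sub]
    have := hf2 (X i) (subset_convexHull ℝ _ ⟨i, rfl⟩)
    linarith
  set P : Set (E d) := {q | ∀ i, 0 < ⟪q, X i - y⟫} with hPdef
  have hPo : IsOpen P := by
    have : P = ⋂ i, {q : E d | 0 < ⟪q, X i - y⟫} := by ext; simp [hPdef]
    rw [this]
    exact isOpen_iInter_of_finite fun i => isOpen_lt continuous_const (by fun_prop)
  have hPc : Convex ℝ P := by
    intro a ha b hb r s hr hs hrs i
    rw [inner_add_left, real_inner_smul_left, real_inner_smul_left]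
    have h1 := ha i
    have h2 := hb i
    rcases hr.eq_or_lt with h | h
    · have : s = 1 := by linarith
      subst this
      rw [← h]; linarith
    · have := mul_pos h h1
      have := mul_nonneg hs h2.le
      linarith
  set V : Set (E d) := {v | ({i : Fin n | 0 < ⟪v, X i - y⟫} : Set (Fin n)).ncard ≤ m} with hV
  set C := PointedCone.hull ℝ V with hC
  have hdisj : Disjoint P (C : Set (E d)) := by
    rw [Set.disjoint_left]
    intro q hq hqC
    obtain ⟨g, hg1, hg2, hg3⟩ := PointedCone.mem_hull_set.1 hqC
    refine no_positive_combination X m hmn hP y g.support g ?_ ?_ ?_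
    · intro v hv
      exact lt_of_le_of_ne (hg2 v) (Ne.symm (by simpa using hv))
    · intro v hv
      exact hg1 hv
    · intro i
      have := hq i
      rw [← hg3] at this
      exact this
  obtain ⟨f, c, hf1, hf2⟩ := geometric_hahn_banach_open hPc hPo C.convex hdisj
  have hc0 : c ≤ 0 := by simpa using hf2 0 (by simp)
  have hfC : ∀ v ∈ V, 0 ≤ f v := by
    intro v hv
    by_contra hneg
    push Not at hneg
    have hvC : v ∈ C := PointedCone.subset_hull hv
    have h1 : ((c - 1) / f v) • v ∈ C := by
      have h0 : 0 ≤ (c - 1) / f v := div_nonneg_of_nonpos (by linarith) hneg.le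
      exact C.smul_mem h0 hvC
    have := hf2 _ h1
    rw [map_smul, smul_eq_mul, div_mul_cancel₀ _ hneg.ne] at this
    linarith
  refine ⟨-(InnerProductSpace.toDual ℝ (E d)).symm f, p, hpX, ?_, ?_⟩
  · rw [inner_neg_left, InnerProductSpace.toDual_symm_apply]
    have := hf1 p hpX
    linarith
  · intro v hv
    rw [inner_neg_left, InnerProductSpace.toDual_symm_apply] at hv
    by_contra hcon
    have := hfC v (by simp only [hV, Set.mem_ofPred_eq]; omega)
    linarith

/-- Upper semicontinuity of the count along a segment. -/
lemma count_limit {n : ℕ} (a b : Fin n → ℝ) (k : ℕ)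
    (h : ∀ e : ℝ, 0 < e → k ≤ ({i : Fin n | a i ≤ e * b i} : Set (Fin n)).ncard) :
    k ≤ ({i : Fin n | a i ≤ 0} : Set (Fin n)).ncard := by
  have h1 : ∀ i, ∀ᶠ e in nhdsWithin (0 : ℝ) (Set.Ioi 0), a i ≤ e * b i → a i ≤ 0 := by
    intro i
    by_cases hi : a i ≤ 0
    · exact Filter.Eventually.of_forall fun _ _ => hi
    · have ht : Filter.Tendsto (fun e : ℝ => e * b i) (nhdsWithin 0 (Set.Ioi 0)) (nhds 0) := by
        have : Filter.Tendsto (fun e : ℝ => e * b i) (nhds 0) (nhds (0 * b i)) :=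
          (continuous_id.mul continuous_const).tendsto 0
        rw [zero_mul] at this
        exact this.mono_left nhdsWithin_le_nhds
      filter_upwards [ht.eventually_lt_const (not_le.1 hi)] with e he h2
      linarith
  have h2 := (Filter.eventually_all.2 h1).and self_mem_nhdsWithin
  obtain ⟨e, he, he0⟩ := h2.exists
  exact (h e he0).trans (Set.ncard_le_ncard (fun i hi => he i hi) (Set.toFinite _))

lemma exists_deep {d n : ℕ} (X : Fin n → E d) (m : ℕ) (hmn : m < n)
    (hP : ProjDeep X m) (y : E d) :
    ∃ x ∈ convexHull ℝ (Set.range X), ∀ v : E d, ⟪v, x⟫ < ⟪v, y⟫ → m + 1 ≤ sideCount X v x := by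
  by_cases hy : y ∈ convexHull ℝ (Set.range X)
  · exact ⟨y, hy, fun v hv => absurd hv (lt_irrefl _)⟩
  obtain ⟨u, p, hp, hup, hu⟩ := exists_dir X m hmn hP y hy
  set K := convexHull ℝ (Set.range X) with hKdef
  have hK : IsCompact K := (Set.finite_range X).isCompact_convexHull ℝ
  have hKc : Convex ℝ K := convex_convexHull ℝ _
  have hperp : ∀ w : E d, ⟪u, w⟫ = 0 → m + 1 ≤ sideCount X w y := by
    intro w hw
    have := count_limit (fun i => ⟪w, X i - y⟫) (fun i => ⟪p, X i - y⟫) (m + 1) (by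
      intro e he
      have h1 := hu (e • p - w) (by
        rw [inner_sub_right, hw, real_inner_smul_right]
        have := mul_pos he hup
        linarith)
      refine h1.trans (Set.ncard_le_ncard (fun i hi => ?_) (Set.toFinite _))
      simp only [Set.mem_ofPred_eq, inner_sub_left, real_inner_smul_left] at hi ⊢
      linarith)
    refine this.trans (Set.ncard_le_ncard (fun i hi => ?_) (Set.toFinite _))
    simp only [Set.mem_ofPred_eq, inner_sub_right] at hi ⊢
    linarith
  have hKp : ∀ z ∈ K, 0 < ⟪p, z - y⟫ := by
    intro z hz
    have hsub : K ⊆ {z : E d | ⟪p, y⟫ < ⟪p, z⟫} := by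
      apply convexHull_min
      · rintro _ ⟨i, rfl⟩
        have := hp i
        rw [inner_sub_right] at this
        simp only [Set.mem_ofPred_eq]; linarith
      · exact convex_halfSpace_gt (IsLinearMap.mk (fun a b => inner_add_right _ _ _)
          (fun c a => real_inner_smul_right _ _ _)) _
    have := hsub hz
    rw [inner_sub_right]
    simp only [Set.mem_ofPred_eq] at this; linarith
  set T : Set ℝ := {t | y + t • u ∈ K} with hT
  have hTcl : IsClosed T := hK.isClosed.preimage (by fun_prop)
  have hTpos : ∀ t ∈ T, 0 < t := by
    intro t ht
    have := hKp _ ht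
    rw [add_sub_cancel_left, real_inner_smul_right, real_inner_comm] at this
    exact (pos_iff_pos_of_mul_pos this).2 hup
  have hTne : T.Nonempty := by
    by_contra hne
    rw [Set.not_nonempty_iff_eq_empty] at hne
    set L0 : AffineSubspace ℝ (E d) := AffineSubspace.mk' y (Submodule.span ℝ {u}) with hL0
    set L : Set (E d) := (L0 : Set (E d)) with hL
    have hLmem : ∀ z, z ∈ L ↔ ∃ t : ℝ, z = y + t • u := by
      intro z
      simp only [hL, hL0, SetLike.mem_coe, AffineSubspace.mem_mk', vsub_eq_sub,
        Submodule.mem_span_singleton]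
      constructor
      · rintro ⟨t, ht⟩; exact ⟨t, by rw [ht]; abel⟩
      · rintro ⟨t, rfl⟩; exact ⟨t, by abel⟩
    have hLcl : IsClosed L := AffineSubspace.closed_of_finiteDimensional _
    have hLc : Convex ℝ L := AffineSubspace.convex _
    have hdisj : Disjoint K L := by
      rw [Set.disjoint_left]
      intro z hz hzL
      obtain ⟨t, rfl⟩ := (hLmem z).1 hzL
      have : t ∈ T := hz
      rw [hne] at this
      exact this
    obtain ⟨f, a, b, h1, h2, h3⟩ := geometric_hahn_banach_compact_closed hKc hK hLc hLcl hdisj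
    have hfu : f u = 0 := by
      by_contra hfu
      have := h3 (y + ((b - f y) / f u) • u) ((hLmem _).2 ⟨_, rfl⟩)
      rw [map_add, map_smul, smul_eq_mul, div_mul_cancel₀ _ hfu] at this
      linarith
    have hfy := h3 y ((hLmem _).2 ⟨0, by simp⟩)
    set w := (InnerProductSpace.toDual ℝ (E d)).symm (-f) with hw
    have hwa : ∀ z, ⟪w, z⟫ = - f z := by
      intro z; rw [hw, InnerProductSpace.toDual_symm_apply]; rfl
    have h4 := hperp w (by rw [real_inner_comm, hwa, hfu, neg_zero])
    unfold sideCount at h4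
    have : ({i : Fin n | ⟪w, X i⟫ ≤ ⟪w, y⟫} : Set (Fin n)) = ∅ := by
      ext i
      simp only [Set.mem_ofPred_eq, hwa, Set.mem_empty_iff_false, iff_false]
      have := h1 (X i) (subset_convexHull ℝ _ ⟨i, rfl⟩)
      linarith
    rw [this] at h4
    simp at h4
  have hTb : BddBelow T := ⟨0, fun t ht => (hTpos t ht).le⟩
  set t := sInf T with ht
  have htT : t ∈ T := hTcl.csInf_mem hTne hTb
  have ht0 := hTpos t htT
  refine ⟨y + t • u, htT, ?_⟩
  intro v hv
  have hvu : ⟪v, u⟫ < 0 := by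
    rw [inner_add_right, real_inner_smul_right] at hv
    by_contra h
    have := mul_nonneg ht0.le (not_lt.1 h)
    linarith
  have := count_limit (fun i => ⟪v, X i⟫ - ⟪v, y + t • u⟫) (fun i => -⟪v, u⟫) (m + 1) (by
    intro e he
    have hnot : y + (t - e) • u ∉ K := by
      intro h
      have : t - e ∈ T := h
      have := csInf_le hTb this
      linarith
    obtain ⟨f, a, h1, h2⟩ := geometric_hahn_banach_closed_point hKc hK.isClosed hnot
    have hfu : f u < 0 := by
      have := h1 _ htT
      simp only [map_add, map_smul, smul_eq_mul] at this h2
      by_contra h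
      have := mul_nonneg he.le (not_lt.1 h)
      nlinarith
    set g := (InnerProductSpace.toDual ℝ (E d)).symm f with hg
    have hga : ∀ z, ⟪g, z⟫ = f z := by
      intro z; rw [hg, InnerProductSpace.toDual_symm_apply]
    set r := ⟪v, u⟫ / f u with hr
    have hr0 : 0 ≤ r := div_nonneg_of_nonpos hvu.le hfu.le
    have hru : r * f u = ⟪v, u⟫ := by rw [hr, div_mul_cancel₀ _ hfu.ne]
    have h4 := hperp (v - r • g) (by
      rw [real_inner_comm, inner_sub_left, real_inner_smul_left, hga, hru, sub_self])
    refine h4.trans (Set.ncard_le_ncard (fun i hi => ?_) (Set.toFinite _))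
    simp only [Set.mem_ofPred_eq, inner_sub_left, real_inner_smul_left, hga, inner_add_right,
      real_inner_smul_right] at hi ⊢
    have h5 := h1 (X i) (subset_convexHull ℝ _ ⟨i, rfl⟩)
    simp only [map_add, map_smul, smul_eq_mul] at h2
    have h6 : r * f (X i) ≤ r * (f y + (t - e) * f u) :=
      mul_le_mul_of_nonneg_left (by linarith) hr0
    have h7 : r * (f y + (t - e) * f u) = r * f y + (t - e) * ⟪v, u⟫ := by
      rw [← hru]; ring
    linarith)
  refine this.trans (Set.ncard_le_ncard (fun i hi => ?_) (Set.toFinite _))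
  simp only [Set.mem_ofPred_eq] at hi ⊢
  linarith

lemma hausdorff_pos_finite {d : ℕ} (M : Set (E d)) (hM : Convex ℝ M) (hne : M.Nonempty)
    (hb : Bornology.IsBounded M) :
    μH[(Module.finrank ℝ (affineSpan ℝ M).direction : ℝ)] M ≠ 0 ∧
    μH[(Module.finrank ℝ (affineSpan ℝ M).direction : ℝ)] M ≠ ⊤ := by
  set A := affineSpan ℝ M with hA
  obtain ⟨x, hx⟩ := hne.intrinsicInterior hM
  obtain ⟨q, hq, rfl⟩ := hx
  have : Nonempty A := ⟨q⟩
  let e : A.direction ≃ᵢ A := IsometryEquiv.vaddConst q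
  let g : A.direction → E d := fun w => ((e w : A) : E d)
  have hg : Isometry g := isometry_subtype_coe.comp e.isometry
  have himg : g '' (g ⁻¹' M) = M := by
    rw [Set.image_preimage_eq_iff]
    intro z hz
    exact ⟨e.symm ⟨z, subset_affineSpan ℝ M hz⟩, by simp [g]⟩
  have hInt : (interior (g ⁻¹' M)).Nonempty := by
    have : g ⁻¹' M = e ⁻¹' ((↑) ⁻¹' M : Set A) := rfl
    rw [this]
    have h2 : e.toHomeomorph ⁻¹' interior ((↑) ⁻¹' M : Set A) =
        interior (e.toHomeomorph ⁻¹' ((↑) ⁻¹' M : Set A)) := e.toHomeomorph.preimage_interior _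
    refine ⟨e.symm q, ?_⟩
    have h3 : e.symm q ∈ e.toHomeomorph ⁻¹' interior ((↑) ⁻¹' M : Set A) := by
      simpa using hq
    rw [h2] at h3
    exact h3
  have hbd : Bornology.IsBounded (g ⁻¹' M) := hg.antilipschitz.isBounded_preimage hb
  have heq : μH[(Module.finrank ℝ A.direction : ℝ)] M =
      μH[(Module.finrank ℝ A.direction : ℝ)] (g ⁻¹' M) := by
    conv_lhs => rw [← himg]
    exact hg.hausdorffMeasure_image (Or.inl (by positivity)) _
  have := MeasureTheory.isAddHaarMeasure_hausdorffMeasure (E := A.direction)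
  rw [heq]
  refine ⟨?_, hbd.measure_lt_top.ne⟩
  have := isOpen_interior.measure_pos
    (μH[(Module.finrank ℝ A.direction : ℝ)] : Measure A.direction) hInt
  exact (this.trans_le (measure_mono interior_subset)).ne'

lemma setAverage_mem {d : ℕ} (M K : Set (E d)) (hM : Convex ℝ M) (hne : M.Nonempty)
    (hK : IsCompact K) (hKc : Convex ℝ K) (hMK : M ⊆ K) : setAverage M ∈ K := by
  obtain ⟨h0, h1⟩ := hausdorff_pos_finite M hM hne (hK.isBounded.subset hMK)
  have hae : ∀ᵐ x ∂((μH[(Module.finrank ℝ (affineSpan ℝ M).direction : ℝ)] :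
      Measure (E d)).restrict M), x ∈ K := by
    rw [ae_iff]
    have hm : MeasurableSet {a : E d | a ∉ K} := hK.isClosed.measurableSet.compl
    rw [Measure.restrict_apply hm]
    have : {a : E d | a ∉ K} ∩ M = ∅ := by
      ext z
      simp only [Set.mem_inter_iff, Set.mem_ofPred_eq, Set.mem_empty_iff_false, iff_false, not_and]
      exact fun h h' => h (hMK h')
    rw [this, measure_empty]
  obtain ⟨C, hC⟩ := hK.isBounded.exists_norm_le
  have hInt : IntegrableOn (fun x : E d => x) M
      (μH[(Module.finrank ℝ (affineSpan ℝ M).direction : ℝ)] : Measure (E d)) := by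
    refine IntegrableOn.of_bound h1.lt_top (by fun_prop) C ?_
    filter_upwards [hae] with x hx using hC x hx
  have := hKc.set_average_mem hK.isClosed h0 h1 hae hInt
  rw [setAverage_eq] at this
  exact this

lemma exists_unit {d : ℕ} (hd : 0 < d) : ∃ u : E d, ‖u‖ = 1 :=
  ⟨EuclideanSpace.single ⟨0, hd⟩ 1, by simp⟩

lemma sideCount_le {d n : ℕ} (X : Fin n → E d) (u x : E d) : sideCount X u x ≤ n := by
  have := Set.ncard_le_ncard (Set.subset_univ {i : Fin n | ⟪u, X i⟫ ≤ ⟪u, x⟫}) (Set.toFinite _)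
  rw [Set.ncard_univ, Nat.card_eq_fintype_card, Fintype.card_fin] at this
  exact this

lemma depth_le {d n : ℕ} (X : Fin n → E d) (x u : E d) (hu : ‖u‖ = 1) :
    depth X x ≤ (sideCount X u x : ℝ) / n := by
  apply csInf_le
  · refine ⟨0, ?_⟩
    rintro r ⟨u, _, rfl⟩
    positivity
  · exact ⟨u, hu, rfl⟩

lemma le_depth {d n : ℕ} (hd : 0 < d) (X : Fin n → E d) (x : E d) (c : ℝ)
    (h : ∀ u : E d, ‖u‖ = 1 → c ≤ (sideCount X u x : ℝ) / n) : c ≤ depth X x := by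
  apply le_csInf
  · obtain ⟨u, hu⟩ := exists_unit hd
    exact ⟨_, u, hu, rfl⟩
  · rintro r ⟨u, hu, rfl⟩
    exact h u hu

lemma depth_mem {d n : ℕ} (hd : 0 < d) (X : Fin n → E d) (x : E d) :
    depth X x ∈ (fun k : ℕ => (k : ℝ) / n) '' (Set.Iic n) := by
  set S := {r : ℝ | ∃ u : E d, ‖u‖ = 1 ∧ r = (sideCount X u x : ℝ) / (n : ℝ)} with hS
  have hsub : S ⊆ (fun k : ℕ => (k : ℝ) / n) '' (Set.Iic n) := by
    rintro r ⟨u, _, rfl⟩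
    exact ⟨sideCount X u x, sideCount_le X u x, rfl⟩
  have hfin : S.Finite := ((Set.finite_Iic n).image _).subset hsub
  have hne : S.Nonempty := by
    obtain ⟨u, hu⟩ := exists_unit hd
    exact ⟨_, u, hu, rfl⟩
  exact hsub (hne.csInf_mem hfin)

lemma range_depth_finite {d n : ℕ} (hd : 0 < d) (X : Fin n → E d) :
    (Set.range (depth X)).Finite := by
  refine ((Set.finite_Iic n).image (fun k : ℕ => (k : ℝ) / n)).subset ?_
  rintro _ ⟨x, rfl⟩
  exact depth_mem hd X x

lemma exists_maxDepth {d n : ℕ} (hd : 0 < d) (X : Fin n → E d) :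
    ∃ x, depth X x = maxDepth X :=
  (Set.range_nonempty (depth X)).csSup_mem (range_depth_finite hd X)

lemma depth_le_maxDepth {d n : ℕ} (hd : 0 < d) (X : Fin n → E d) (x : E d) :
    depth X x ≤ maxDepth X :=
  le_csSup (range_depth_finite hd X).bddAbove ⟨x, rfl⟩

lemma maxDepth_nonneg {d n : ℕ} (hd : 0 < d) (X : Fin n → E d) : 0 ≤ maxDepth X :=
  (le_depth hd X 0 0 (fun u _ => by positivity)).trans (depth_le_maxDepth hd X 0)

lemma convex_MSet {d n : ℕ} (hd : 0 < d) (X : Fin n → E d) : Convex ℝ (MSet X) := by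
  intro a ha b hb r s hr hs hrs
  have ha' : depth X a = maxDepth X := ha
  have hb' : depth X b = maxDepth X := hb
  apply le_antisymm (depth_le_maxDepth hd X _)
  apply le_depth hd
  intro u hu
  have hcase : ⟪u, a⟫ ≤ ⟪u, r • a + s • b⟫ ∨ ⟪u, b⟫ ≤ ⟪u, r • a + s • b⟫ := by
    rw [inner_add_right, real_inner_smul_right, real_inner_smul_right]
    have hs' : s = 1 - r := by linarith
    subst hs'
    rcases le_total ⟪u, a⟫ ⟪u, b⟫ with h | h
    · left; nlinarith
    · right; nlinarith
  have key : ∀ z : E d, ⟪u, z⟫ ≤ ⟪u, r • a + s • b⟫ → depth X z = maxDepth X →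
      maxDepth X ≤ (sideCount X u (r • a + s • b) : ℝ) / n := by
    intro z hz hzM
    rw [← hzM]
    refine (depth_le X z u hu).trans ?_
    have : sideCount X u z ≤ sideCount X u (r • a + s • b) :=
      Set.ncard_le_ncard (fun i hi => le_trans hi hz) (Set.toFinite _)
    gcongr
  rcases hcase with h | h
  · exact key a h ha'
  · exact key b h hb'

lemma sideCount_append {d n m : ℕ} (X : Fin n → E d) (y u x : E d) :
    sideCount (Fin.append X (fun _ : Fin m => y)) u x =
      sideCount X u x + (if ⟪u, y⟫ ≤ ⟪u, x⟫ then m else 0) := by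
  classical
  unfold sideCount
  simp only [Set.ncard_eq_toFinset_card', Set.toFinset_ofPred, Finset.card_filter]
  rw [Fin.sum_univ_add]
  simp only [Fin.append_left, Fin.append_right]
  congr 1
  simp

lemma exists_isAu {d : ℕ} (u : E d) (hu : ‖u‖ = 1) (hd : 2 ≤ d) :
    ∃ A : Fin (d - 1) → E d, IsAu u A ∧
      ∀ w : E d, ⟪w, u⟫ = 0 → w = ∑ j, ⟪A j, w⟫ • A j := by
  have : Fact (Module.finrank ℝ (E d) = (d - 1) + 1) := ⟨by simp; omega⟩
  have hu0 : u ≠ 0 := by rintro rfl; simp at hu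
  have hfr : Module.finrank ℝ (ℝ ∙ u)ᗮ = d - 1 := Submodule.finrank_orthogonal_span_singleton hu0
  let b := (stdOrthonormalBasis ℝ (ℝ ∙ u)ᗮ).reindex (finCongr hfr)
  refine ⟨fun j => (b j : E d), ⟨hu, ?_, ?_⟩, ?_⟩
  · exact b.orthonormal.comp_linearIsometry (Submodule.subtypeₗᵢ _)
  · intro j
    have := (b j).2
    rw [real_inner_comm]
    exact Submodule.mem_orthogonal_singleton_iff_inner_right.1 this
  · intro w hw
    have hw' : w ∈ (ℝ ∙ u)ᗮ := by
      rw [Submodule.mem_orthogonal_singleton_iff_inner_right, real_inner_comm]; exact hw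
    have := b.sum_repr' ⟨w, hw'⟩
    have := congrArg (Subtype.val) this
    simpa using this.symm

lemma projDeep_of_lambda0 {d n : ℕ} (hd : 2 ≤ d) (X : Fin n → E d) (m : ℕ) (hn : 0 < n)
    (hm' : (m : ℝ) ≤ (n : ℝ) * lambda0 X - 1) : ProjDeep X m := by
  intro u0 hu0
  set u := ‖u0‖⁻¹ • u0 with hudef
  have hu : ‖u‖ = 1 := by
    rw [hudef, norm_smul, norm_inv, norm_norm, inv_mul_cancel₀ (norm_ne_zero_iff.2 hu0)]
  obtain ⟨A, hA, hrepr⟩ := exists_isAu u hu hd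
  have hd1 : 0 < d - 1 := by omega
  have hl : lambda0 X ≤ maxDepth (fun i => proj A (X i)) := by
    apply csInf_le
    · refine ⟨0, ?_⟩
      rintro r ⟨u, A, _, rfl⟩
      exact maxDepth_nonneg hd1 _
    · exact ⟨u, A, hA, rfl⟩
  obtain ⟨z, hz⟩ := exists_maxDepth hd1 (fun i => proj A (X i))
  have hn' : (0 : ℝ) < n := by exact_mod_cast hn
  refine ⟨embed A z, ?_⟩
  intro w hw0 hwu
  have hwu' : ⟪w, u⟫ = 0 := by rw [hudef, real_inner_smul_right, hwu, mul_zero]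
  have hw := hrepr w hwu'
  have hin : ∀ x : E d, ⟪proj A w, proj A x⟫ = ⟪w, x⟫ := by
    intro x
    conv_rhs => rw [hw]
    rw [sum_inner, PiLp.inner_apply]
    refine Finset.sum_congr rfl fun j _ => ?_
    rw [real_inner_smul_left]
    exact mul_comm _ _
  have hie : ⟪proj A w, z⟫ = ⟪w, embed A z⟫ := by
    rw [embed, inner_sum, PiLp.inner_apply]
    refine Finset.sum_congr rfl fun j _ => ?_
    rw [real_inner_smul_right, real_inner_comm (A j) w]
    rfl
  have hpw : proj A w ≠ 0 := by
    intro h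
    have := hin w
    rw [h, inner_zero_left] at this
    exact hw0 (inner_self_eq_zero.1 this.symm)
  have hnorm : 0 < ‖proj A w‖ := norm_pos_iff.2 hpw
  have hdep := depth_le (fun i => proj A (X i)) z (‖proj A w‖⁻¹ • proj A w)
    (by rw [norm_smul, norm_inv, norm_norm, inv_mul_cancel₀ hnorm.ne'])
  have hsc : sideCount (fun i => proj A (X i)) (‖proj A w‖⁻¹ • proj A w) z =
      sideCount X w (embed A z) := by
    unfold sideCount
    congr 1
    ext i
    simp only [Set.mem_ofPred_eq, real_inner_smul_left, hin, hie]
    exact mul_le_mul_iff_right₀ (inv_pos.2 hnorm)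
  rw [hsc, le_div_iff₀ hn'] at hdep
  have h1 : (m : ℝ) + 1 ≤ sideCount X w (embed A z) := by
    have := mul_le_mul_of_nonneg_left (hl.trans hz.symm.le) hn'.le
    linarith
  exact_mod_cast h1

/-- If `X` is in general position and `1 ≤ m ≤ n·λ₀ − 1`, then for every
point `y`, contaminating `X` with `m` repetitions of `y` leaves the Tukey halfspace median
inside the convex hull of the original sample. -/
theorem median_stays_in_hull {d n : ℕ} (hd : 2 ≤ d) (X : Fin n → E d)
    (hX : inGeneralPosition X) (m : ℕ) (hm : 1 ≤ m)
    (hm' : (m : ℝ) ≤ (n : ℝ) * lambda0 X - 1) :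
    ∀ y : E d, TukeyMedian (Fin.append X (fun _ : Fin m => y)) ∈
      convexHull ℝ (Set.range X) := by
  have hn : 0 < n := by
    rcases Nat.eq_zero_or_pos n with h | h
    · subst h
      have : (0 : ℝ) ≤ m := Nat.cast_nonneg m
      norm_num at hm'
      linarith
    · exact h
  have hd0 : 0 < d := by omega
  have hP := projDeep_of_lambda0 hd X m hn hm'
  have hmn : m < n := by
    obtain ⟨u, hu⟩ := exists_unit hd0
    obtain ⟨A, hA, -⟩ := exists_isAu u hu hd
    obtain ⟨x0, hx0⟩ := hP u (by rintro rfl; simp at hu)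
    have hj : A ⟨0, by omega⟩ ≠ 0 := hA.2.1.ne_zero _
    have := (hx0 _ hj (hA.2.2 _)).trans (sideCount_le X _ _)
    omega
  intro y
  have hK : IsCompact (convexHull ℝ (Set.range X)) := (Set.finite_range X).isCompact_convexHull ℝ
  have hNpos : (0 : ℝ) < ((n + m : ℕ) : ℝ) := by exact_mod_cast (by omega : 0 < n + m)
  obtain ⟨x, hxK, hx⟩ := exists_deep X m hmn hP y
  set Z := Fin.append X (fun _ : Fin m => y) with hZ
  have hdeep : ((m + 1 : ℕ) : ℝ) / ((n + m : ℕ) : ℝ) ≤ maxDepth Z := by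
    refine le_trans (le_depth hd0 Z x _ ?_) (depth_le_maxDepth hd0 Z x)
    intro v hv
    have : m + 1 ≤ sideCount Z v x := by
      rw [hZ, sideCount_append]
      by_cases h : ⟪v, y⟫ ≤ ⟪v, x⟫
      · rw [if_pos h]
        have : 0 < sideCount X v x := by
          rw [sideCount, Set.ncard_pos (Set.toFinite _)]
          by_contra hcon
          rw [Set.not_nonempty_iff_eq_empty] at hcon
          have hsub : convexHull ℝ (Set.range X) ⊆ {z : E d | ⟪v, x⟫ < ⟪v, z⟫} := by
            apply convexHull_min
            · rintro _ ⟨i, rfl⟩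
              by_contra hi
              have : i ∈ ({i : Fin n | ⟪v, X i⟫ ≤ ⟪v, x⟫} : Set (Fin n)) := by
                simpa using hi
              rw [hcon] at this
              exact this
            · exact convex_halfSpace_gt (IsLinearMap.mk (fun a b => inner_add_right _ _ _)
                (fun c a => real_inner_smul_right _ _ _)) _
          have hlt := hsub hxK
          simp at hlt
        omega
      · rw [if_neg h]
        exact hx v (not_le.1 h)
    gcongr
  refine setAverage_mem _ _ (convex_MSet hd0 Z) (exists_maxDepth hd0 Z) hK
    (convex_convexHull ℝ _) ?_
  intro z hz
  have hz' : depth Z z = maxDepth Z := hz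
  by_contra hzK
  obtain ⟨f, c, h1, h2⟩ := geometric_hahn_banach_point_closed (convex_convexHull ℝ _)
    hK.isClosed hzK
  set p := (InnerProductSpace.toDual ℝ (E d)).symm f with hp
  have hpa : ∀ q, ⟪p, q⟫ = f q := by
    intro q; rw [hp, InnerProductSpace.toDual_symm_apply]
  have hXi : ∀ i, f z < f (X i) := fun i =>
    h1.trans (h2 (X i) (subset_convexHull ℝ _ ⟨i, rfl⟩))
  have hp0 : p ≠ 0 := by
    intro h0
    have := hXi ⟨0, hn⟩
    rw [← hpa, ← hpa, h0] at this
    simp at this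
  have hpn : 0 < ‖p‖ := norm_pos_iff.2 hp0
  have hdep := depth_le Z z (‖p‖⁻¹ • p)
    (by rw [norm_smul, norm_inv, norm_norm, inv_mul_cancel₀ hpn.ne'])
  have h0 : sideCount X (‖p‖⁻¹ • p) z = 0 := by
    have : ({i : Fin n | ⟪‖p‖⁻¹ • p, X i⟫ ≤ ⟪‖p‖⁻¹ • p, z⟫} : Set (Fin n)) = ∅ := by
      ext i
      simp only [Set.mem_ofPred_eq, real_inner_smul_left, Set.mem_empty_iff_false, iff_false,
        not_le, hpa]
      exact mul_lt_mul_of_pos_left (hXi i) (inv_pos.2 hpn)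
    rw [sideCount, this, Set.ncard_empty]
  have hle : sideCount Z (‖p‖⁻¹ • p) z ≤ m := by
    rw [hZ, sideCount_append, h0]
    split_ifs <;> omega
  have h3 : ((m + 1 : ℕ) : ℝ) / ((n + m : ℕ) : ℝ) ≤ (m : ℝ) / ((n + m : ℕ) : ℝ) := by
    refine (hdeep.trans (hz'.symm.le.trans hdep)).trans ?_
    gcongr
  rw [div_le_div_iff_of_pos_right hNpos] at h3
  push_cast at h3
  linarith
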